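/- For every n ≥ 6 there is no permutation of {1,…,n} that avoids the pattern 123 and contains the pattern 321 exactly once, and likewise no permutation that avoids 321 and contains 123 exactly once; that is, s_n(123;321) = s_n(321;123) = 0 for n ≥ 6. -/

import Mathlib

/-!
A poset with more than `r * s` elements has a chain of size `r + 1` or an antichain of size
`s + 1`: peel off the minimal elements, which form an antichain, and extend a chain of the rest
downwards by one of them. Applied to the points `(i, π i)` this is the Erdős–Szekeres theorem. If
`π` has at least `r * s + 2` entries, no increasing subsequence of length `r + 1`, and a decreasing
one of length `s + 1`, then deleting an entry of the latter leaves more than `r * s` entries, hence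
a second decreasing subsequence. The patterns `123` and `321` are the case `r = s = 2`.
-/

/-- Number of occurrences of the pattern `α ∈ S_k` in the permutation `π ∈ S_n`:
the number of strictly increasing choices of `k` indices such that the corresponding
subword of `π` is order-isomorphic to `α`. -/
noncomputable def occCount {k n : ℕ} (α : Equiv.Perm (Fin k)) (π : Equiv.Perm (Fin n)) : ℕ :=
  Nat.card {f : Fin k → Fin n // StrictMono f ∧ ∀ a b : Fin k, α a < α b ↔ π (f a) < π (f b)}

/-- `π` avoids the pattern `α`. -/
def avoids {k n : ℕ} (α : Equiv.Perm (Fin k)) (π : Equiv.Perm (Fin n)) : Prop :=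
  occCount α π = 0

/-- `π` contains the pattern `α` exactly once. -/
def containsOnce {k n : ℕ} (α : Equiv.Perm (Fin k)) (π : Equiv.Perm (Fin n)) : Prop :=
  occCount α π = 1

/-- The pattern `123` (as a permutation of `Fin 3`, 0-indexed). -/
def p123 : Equiv.Perm (Fin 3) := ⟨![0,1,2], ![0,1,2], by decide, by decide⟩
/-- The pattern `132`. -/
def p132 : Equiv.Perm (Fin 3) := ⟨![0,2,1], ![0,2,1], by decide, by decide⟩
/-- The pattern `213`. -/
def p213 : Equiv.Perm (Fin 3) := ⟨![1,0,2], ![1,0,2], by decide, by decide⟩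
/-- The pattern `231`. -/
def p231 : Equiv.Perm (Fin 3) := ⟨![1,2,0], ![2,0,1], by decide, by decide⟩
/-- The pattern `312`. -/
def p312 : Equiv.Perm (Fin 3) := ⟨![2,0,1], ![1,2,0], by decide, by decide⟩
/-- The pattern `321`. -/
def p321 : Equiv.Perm (Fin 3) := ⟨![2,1,0], ![2,1,0], by decide, by decide⟩

/-- `s_n(α;β)`: the number of permutations of `{1,…,n}` that avoid `α` and contain `β`
exactly once. -/
noncomputable def sAvoidContain (α β : Equiv.Perm (Fin 3)) (n : ℕ) : ℕ :=
  Nat.card {π : Equiv.Perm (Fin n) // avoids α π ∧ containsOnce β π}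

/-- `s_n(∅;{α,β})`: the number of permutations of `{1,…,n}` that contain each of `α` and `β`
exactly once. -/
noncomputable def sContainBoth (α β : Equiv.Perm (Fin 3)) (n : ℕ) : ℕ :=
  Nat.card {π : Equiv.Perm (Fin n) // containsOnce α π ∧ containsOnce β π}

section ErdosSzekeres

open Finset

theorem exists_isChain_or_isAntichain_of_mul_lt_card {α : Type*} [PartialOrder α] {r s : ℕ}
    {A : Finset α} (hA : r * s < #A) :
    (∃ C ⊆ A, #C = r + 1 ∧ IsChain (· ≤ ·) (C : Set α)) ∨
      ∃ C ⊆ A, #C = s + 1 ∧ IsAntichain (· ≤ ·) (C : Set α) := by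
  classical
  induction r generalizing A with
  | zero =>
    obtain ⟨x, hx⟩ := card_pos.1 (by simpa using hA)
    exact .inl ⟨{x}, by simpa using hx, by simp, by simp⟩
  | succ r ih =>
    let M := {x ∈ A | Minimal (· ∈ A) x}
    have hM : IsAntichain (· ≤ ·) (M : Set α) :=
      (setOfPred_minimal_antichain (· ∈ A)).subset fun x hx => (mem_filter.1 hx).2
    by_cases hMs : s < #M
    · obtain ⟨C, hCM, hC⟩ := exists_subset_card_eq (Nat.succ_le_of_lt hMs)
      exact .inr ⟨C, hCM.trans (filter_subset _ _), hC, hM.subset (coe_subset.2 hCM)⟩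
    have hsdiff : r * s < #(A \ M) := by
      have := le_card_sdiff M A
      rw [add_one_mul] at hA
      lia
    obtain ⟨C, hCA, hC, hchain⟩ | ⟨C, hCA, hC⟩ := ih hsdiff
    · obtain ⟨x, hx⟩ := C.exists_minimal (card_pos.1 (by lia))
      have hxA := mem_sdiff.1 (hCA hx.prop)
      obtain ⟨y, hyx, hyA⟩ : ∃ y, y < x ∧ y ∈ A :=
        (not_minimal_iff_exists_lt hxA.1).1 fun h => hxA.2 (mem_filter.2 ⟨hxA.1, h⟩)
      have hy : ∀ z ∈ C, y < z := fun z hz =>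
        hyx.trans_le ((hchain.total hx.prop hz).elim id (hx.le_of_le hz))
      refine .inl ⟨insert y C, insert_subset hyA (hCA.trans sdiff_subset), ?_, ?_⟩
      · rw [card_insert_of_notMem fun h => (hy y h).false, hC]
      · rw [coe_insert]
        exact hchain.insert fun z hz _ => .inl (hy z hz).le
    · exact .inr ⟨C, hCA.trans sdiff_subset, hC⟩

variable {ι α : Type*} [LinearOrder ι] [LinearOrder α] {f : ι → α} {r s : ℕ}

theorem exists_strictMono_or_strictAnti_of_mul_lt_card {A : Finset ι} (hf : Set.InjOn f A)
    (hA : r * s < #A) :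
    (∃ e : Fin (r + 1) ↪o ι, (∀ a, e a ∈ A) ∧ StrictMono (f ∘ e)) ∨
      ∃ e : Fin (s + 1) ↪o ι, (∀ a, e a ∈ A) ∧ StrictAnti (f ∘ e) := by
  have hgraph : Function.Injective fun i => (i, f i) := fun i j h => congrArg Prod.fst h
  rw [← card_image_of_injective A hgraph] at hA
  obtain ⟨C, hCA, hC, hchain⟩ | ⟨C, hCA, hC, hanti⟩ :=
    exists_isChain_or_isAntichain_of_mul_lt_card hA
  all_goals
    obtain ⟨T, hTA, rfl⟩ := subset_image_iff.1 hCA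
    rw [card_image_of_injective T hgraph] at hC
    have hmem : ∀ a, T.orderEmbOfFin hC a ∈ T := T.orderEmbOfFin_mem hC
    have hgraph_mem := fun a => mem_coe.2 (mem_image_of_mem (fun i => (i, f i)) (hmem a))
  · refine .inl ⟨T.orderEmbOfFin hC, fun a => hTA (hmem a), fun a b hab => ?_⟩
    have hlt := (T.orderEmbOfFin hC).strictMono hab
    have hle := ((hchain.total (hgraph_mem a) (hgraph_mem b)).resolve_right
      fun h => hlt.not_ge h.1).2
    exact hle.lt_of_ne fun h => hlt.ne (hf (hTA (hmem a)) (hTA (hmem b)) h)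
  · refine .inr ⟨T.orderEmbOfFin hC, fun a => hTA (hmem a), fun a b hab => ?_⟩
    have hlt := (T.orderEmbOfFin hC).strictMono hab
    exact not_le.1 fun h => hanti (hgraph_mem a) (hgraph_mem b)
      (fun heq => hlt.ne (congrArg Prod.fst heq)) ⟨hlt.le, h⟩

theorem not_existsUnique_strictAnti [Fintype ι] (hf : f.Injective)
    (hι : r * s + 2 ≤ Fintype.card ι) (hmono : ∀ e : Fin (r + 1) ↪o ι, ¬StrictMono (f ∘ e)) :
    ¬∃! e : Fin (s + 1) ↪o ι, StrictAnti (f ∘ e) := by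
  rintro ⟨e, -, he⟩
  have hcard : r * s < #(univ.erase (e 0)) := by
    rw [card_erase_of_mem (mem_univ _), card_univ]
    lia
  obtain ⟨e', -, he'⟩ | ⟨e', hmem, he'⟩ :=
    exists_strictMono_or_strictAnti_of_mul_lt_card hf.injOn hcard
  · exact hmono e' he'
  · exact ne_of_mem_erase (hmem 0) (by rw [he e' he'])

theorem not_existsUnique_strictMono [Fintype ι] (hf : f.Injective)
    (hι : r * s + 2 ≤ Fintype.card ι) (hanti : ∀ e : Fin (s + 1) ↪o ι, ¬StrictAnti (f ∘ e)) :
    ¬∃! e : Fin (r + 1) ↪o ι, StrictMono (f ∘ e) := by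
  simpa only [Function.comp_assoc, strictAnti_toDual_comp_iff] using
    not_existsUnique_strictAnti (f := OrderDual.toDual ∘ f) (OrderDual.toDual.injective.comp hf)
      (mul_comm r s ▸ hι) (by simpa only [Function.comp_assoc, strictMono_toDual_comp_iff])

end ErdosSzekeres

section Patterns

open Equiv

variable {k n : ℕ} {α : Perm (Fin k)} {π : Perm (Fin n)}

/-- The occurrences of a pattern `α` in `π`, encoded by the increasing enumeration `e` of the
chosen indices: the subword of `π` at these indices is order-isomorphic to `α`. -/
def IsOccurrence (α : Perm (Fin k)) (π : Perm (Fin n)) (e : Fin k ↪o Fin n) : Prop :=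
  ∀ a b, α a < α b ↔ π (e a) < π (e b)

theorem occCount_eq_card_isOccurrence :
    occCount α π = Nat.card {e : Fin k ↪o Fin n // IsOccurrence α π e} :=
  Nat.card_congr
    { toFun f := ⟨.ofStrictMono f.1 f.2.1, f.2.2⟩
      invFun e := ⟨e.1, e.1.strictMono, e.2⟩ }

theorem avoids_iff_forall_not_isOccurrence : avoids α π ↔ ∀ e, ¬IsOccurrence α π e := by
  rw [avoids, occCount_eq_card_isOccurrence, Finite.card_eq_zero_iff, isEmpty_subtype]

theorem containsOnce_iff_existsUnique_isOccurrence :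
    containsOnce α π ↔ ∃! e, IsOccurrence α π e := by
  rw [containsOnce, occCount_eq_card_isOccurrence, Nat.card_eq_one_iff_unique,
    ← unique_iff_subsingleton_and_nonempty, unique_subtype_iff_existsUnique]

theorem isOccurrence_one_iff {e : Fin k ↪o Fin n} :
    IsOccurrence 1 π e ↔ StrictMono (π ∘ e) :=
  ⟨fun h a b => (h a b).1, fun h _ _ => h.lt_iff_lt.symm⟩

theorem isOccurrence_revPerm_iff {e : Fin k ↪o Fin n} :
    IsOccurrence Fin.revPerm π e ↔ StrictAnti (π ∘ e) :=
  ⟨fun h a b hab => (h b a).1 (Fin.rev_lt_rev.2 hab),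
    fun h _ _ => Fin.rev_lt_rev.trans h.lt_iff_gt.symm⟩

theorem p123_eq_one : p123 = 1 := by decide

theorem p321_eq_revPerm : p321 = Fin.revPerm := by decide

end Patterns

theorem sAvoidContain_123_321_eq_zero_general {r s n : ℕ} (hn : r * s + 2 ≤ n) :
    Nat.card {π : Equiv.Perm (Fin n) // avoids (1 : Equiv.Perm (Fin (r + 1))) π ∧
        containsOnce (Fin.revPerm : Equiv.Perm (Fin (s + 1))) π} = 0 ∧
      Nat.card {π : Equiv.Perm (Fin n) // avoids (Fin.revPerm : Equiv.Perm (Fin (s + 1))) π ∧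
        containsOnce (1 : Equiv.Perm (Fin (r + 1))) π} = 0 := by
  have hcard : r * s + 2 ≤ Fintype.card (Fin n) := by rwa [Fintype.card_fin]
  simp only [Finite.card_eq_zero_iff, isEmpty_subtype, not_and,
    avoids_iff_forall_not_isOccurrence, containsOnce_iff_existsUnique_isOccurrence,
    isOccurrence_one_iff, isOccurrence_revPerm_iff]
  exact ⟨fun π => not_existsUnique_strictAnti π.injective hcard,
    fun π => not_existsUnique_strictMono π.injective hcard⟩

/-- `s_n(123;321) = s_n(321;123) = 0` for `n ≥ 6`. -/
theorem sAvoidContain_123_321_eq_zero :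
    ∀ n : ℕ, 6 ≤ n →
      sAvoidContain p123 p321 n = 0 ∧ sAvoidContain p321 p123 n = 0 := by
  intro n hn
  rw [p123_eq_one, p321_eq_revPerm]
  exact sAvoidContain_123_321_eq_zero_general (r := 2) (s := 2) hn
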